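/- arXiv:1212.1887 — 4 statements merged into one kernel-verified Lean document; each statement's English description precedes it below -/
import Mathlib

section
/- Let q, a, b, c, d be nonzero complex numbers and n ≥ 0 an integer; assume (abcd;q)_n ≠ 0 and that the numbers (q^{j}a + q^{−j}/a)/2, j = 0,…,n, are pairwise distinct (equivalently all q-shifted factorials appearing in denominators below are nonzero). Let L be a ℂ-linear functional on the space of complex polynomials in x such that L(∏_{j=0}^{k−1}(1 − 2axq^{j} + a²q^{2j})) = (ab;q)_k (ac;q)_k (ad;q)_k / (abcd;q)_k for every 0 ≤ k ≤ n (this is the moment property of the Askey-Wilson measure, since ∏_{j=0}^{k−1}(1 − 2axq^{j} + a²q^{2j}) = (az;q)_k(a/z;q)_k when x = (z+z^{−1})/2). Then for every complex number t, L((t + x)^n) = Σ_{k=0}^{n} [(ac;q)_k (ab;q)_k (ad;q)_k / (abcd;q)_k] · Σ_{j=0}^{k} q^{k − j²} a^{−2j} (t + (q^{j}a + q^{−j}/a)/2)^n / [(q;q)_j (q^{1−2j}/a²;q)_j (q;q)_{k−j} (q^{2j+1}a²;q)_{k−j}]. -/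
/-!
The nodes `x_j = (q^j a + q^{-j}/a)/2` are exactly the roots of the Askey-Wilson basis polynomials:
`∏_{j<k} (1 - 2axq^j + a²q^{2j}) = ∏_{j<k} (-2aq^j) · ∏_{j<k} (x - x_j)`.
Hence the formula is the Newton expansion of `(t + x)^n` at the nodes `x_0, …, x_n`
(`interpolate_eq_newton`), to which `L` is applied term by term. The coefficients of that expansion
are divided differences `∑_j f(x_j) / ∏_{i ≠ j} (x_j - x_i)`, and the factorization
`-2aq^i (x_j - x_i) = (1 - q^{i-j})(1 - a²q^{i+j})` turns their denominators into
q-shifted factorials (`inv_prod_node_sub`).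
-/

/-- The q-shifted factorial `(a;q)_n = ∏_{k=0}^{n-1} (1 - a q^k)`. -/
noncomputable def qPoch (q a : ℂ) (n : ℕ) : ℂ := ∏ k ∈ Finset.range n, (1 - a * q ^ k)

open Polynomial

/-- Newton's form of the interpolation polynomial, with the divided differences written as
explicit sums over the nodes. -/
theorem interpolate_eq_newton (m : ℕ) (v r : ℕ → ℂ) (hv : Set.InjOn v (Finset.range m)) :
    Lagrange.interpolate (Finset.range m) v r =
      ∑ k ∈ Finset.range m,
        C (∑ j ∈ Finset.range (k + 1),
            r j / ∏ i ∈ (Finset.range (k + 1)).erase j, (v j - v i)) *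
          Lagrange.nodal (Finset.range k) v := by
  induction m with
  | zero => simp
  | succ m ih =>
    have hsub : (Finset.range m : Set ℕ) ⊆ Finset.range (m + 1) := by
      exact_mod_cast Finset.range_subset_range.mpr (Nat.le_succ m)
    have hv' := hv.mono hsub
    rw [Finset.sum_range_succ, ← ih hv']
    set P := Lagrange.interpolate (Finset.range (m + 1)) v r with hP
    set Q := Lagrange.interpolate (Finset.range m) v r with hQ
    set s := ∑ j ∈ Finset.range (m + 1),
      r j / ∏ i ∈ (Finset.range (m + 1)).erase j, (v j - v i) with hs
    have hPd : P.degree < (Finset.range (m + 1)).card := Lagrange.degree_interpolate_lt r hv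
    have hQd : Q.degree < m := by
      have h := Lagrange.degree_interpolate_lt r hv'
      rwa [Finset.card_range] at h
    have hc : P.coeff m = s := by
      have h := Lagrange.coeff_eq_sum hv hPd
      rw [Finset.card_range, Nat.add_sub_cancel] at h
      rw [h]
      exact Finset.sum_congr rfl fun i hi => by rw [hP, Lagrange.eval_interpolate_at_node r hv hi]
    have hN : (Lagrange.nodal (Finset.range m) v).coeff m = 1 := by
      have h := Lagrange.nodal_monic (s := Finset.range m) (v := v)
      rw [Monic, leadingCoeff, Lagrange.natDegree_nodal, Finset.card_range] at h
      exact h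
    -- The difference has degree below `m`, its coefficient at `m` being zero, and has `m` roots.
    have hz : P - (Q + C s * Lagrange.nodal (Finset.range m) v) = 0 := by
      refine Polynomial.eq_zero_of_degree_lt_of_eval_index_eq_zero (v := v) (Finset.range m) hv' ?_ ?_
      · rw [Finset.card_range, degree_lt_iff_coeff_zero]
        intro k hk
        rw [degree_lt_iff_coeff_zero] at hQd
        rw [Finset.card_range, degree_lt_iff_coeff_zero] at hPd
        rcases hk.eq_or_lt with rfl | hlt
        · simp [hQd m le_rfl, hc, hN]
        · have h0 : (Lagrange.nodal (Finset.range m) v).coeff k = 0 :=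
            coeff_eq_zero_of_natDegree_lt (by rwa [Lagrange.natDegree_nodal, Finset.card_range])
          simp [hQd k hlt.le, hPd k hlt, h0]
      · intro i hi
        have hi' : i ∈ Finset.range (m + 1) := Finset.mem_range_succ_iff.mpr
          (Finset.mem_range.mp hi).le
        rw [eval_sub, eval_add, eval_mul, Lagrange.eval_nodal_at_node hi, hP, hQ,
          Lagrange.eval_interpolate_at_node r hv hi', Lagrange.eval_interpolate_at_node r hv' hi]
        ring
    exact sub_eq_zero.mp hz

theorem askeyWilson_basis_eq_nodal {q a : ℂ} (hq : q ≠ 0) (ha : a ≠ 0) (k : ℕ) :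
    (∏ j ∈ Finset.range k,
        (1 - C (2 * a * q ^ j) * X + C (a ^ 2 * q ^ (2 * j)) : ℂ[X])) =
      C (∏ j ∈ Finset.range k, (-2 * a * q ^ j)) *
        Lagrange.nodal (Finset.range k)
          (fun j : ℕ => (q ^ j * a + q ^ (-(j : ℤ)) / a) / 2) := by
  rw [Lagrange.nodal, map_prod, ← Finset.prod_mul_distrib]
  refine Finset.prod_congr rfl fun j _ => ?_
  have h : 1 + a ^ 2 * q ^ (2 * j) =
      (2 * a * q ^ j) * ((q ^ j * a + q ^ (-(j : ℤ)) / a) / 2) := by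
    rw [zpow_neg, zpow_natCast]
    field_simp
    ring
  have h' := congrArg (C : ℂ → ℂ[X]) h
  rw [C_add, C_1, C_mul (a := 2 * a * q ^ j)] at h'
  rw [show -2 * a * q ^ j = -(2 * a * q ^ j) by ring, C_neg]
  linear_combination h'

/-- The linear factor `-2aq^i (x_j - x_i)` splits as `(1 - q^{i-j})(1 - a²q^{i+j})`. -/
theorem node_sub_factor {q a : ℂ} (hq : q ≠ 0) (ha : a ≠ 0) (i j : ℕ) :
    (-2 * a * q ^ i) * ((q ^ j * a + q ^ (-(j : ℤ)) / a) / 2 -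
        (q ^ i * a + q ^ (-(i : ℤ)) / a) / 2) =
      (1 - q ^ ((i : ℤ) - j)) * (1 - a ^ 2 * q ^ (i + j)) := by
  rw [zpow_sub₀ hq, zpow_neg, zpow_neg, zpow_natCast, zpow_natCast, pow_add]
  field_simp
  ring

theorem prod_range_succ_erase {k j : ℕ} (hjk : j ≤ k) (f : ℕ → ℂ) :
    ∏ i ∈ (Finset.range (k + 1)).erase j, f i =
      (∏ i ∈ Finset.range j, f i) * ∏ i ∈ Finset.range (k - j), f (j + 1 + i) := by
  have h : (Finset.range (k + 1)).erase j =
      Finset.range j ∪ Finset.Ico (j + 1) (k + 1) := by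
    ext i
    simp only [Finset.mem_erase, Finset.mem_range, Finset.mem_union, Finset.mem_Ico]
    omega
  have hd : Disjoint (Finset.range j) (Finset.Ico (j + 1) (k + 1)) := by
    rw [Finset.disjoint_left]
    intro i hi hi'
    simp only [Finset.mem_range, Finset.mem_Ico] at hi hi'
    omega
  rw [h, Finset.prod_union hd, Finset.prod_Ico_eq_prod_range,
    show k + 1 - (j + 1) = k - j by omega]

/-- The factors with `i < j`. Reversing the order of the product in both q-shifted factorials
matches them with `1 - q^{-m} = -q^{-m}(1 - q^m)` and `1 - a²q^e = -a²q^e(1 - q^{-e}/a²)`. -/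
theorem prod_lower {q a : ℂ} (hq : q ≠ 0) (ha : a ≠ 0) (j : ℕ) :
    ∏ i ∈ Finset.range j, ((1 - q ^ ((i : ℤ) - j)) * (1 - a ^ 2 * q ^ (i + j))) =
      q ^ ((j : ℤ) ^ 2 - j) * a ^ (2 * (j : ℤ)) *
        (qPoch q q j * qPoch q (q ^ (1 - 2 * (j : ℤ)) / a ^ 2) j) := by
  have hpow : ∏ i ∈ Finset.range j, (a ^ 2 * q ^ (2 * (i : ℤ))) =
      q ^ ((j : ℤ) ^ 2 - j) * a ^ (2 * (j : ℤ)) := by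
    induction j with
    | zero => simp
    | succ j ih =>
      rw [Finset.prod_range_succ, ih]
      push_cast
      rw [show ((j : ℤ) + 1) ^ 2 - (j + 1) = ((j : ℤ) ^ 2 - j) + 2 * j by ring,
        show 2 * ((j : ℤ) + 1) = 2 * j + 2 by ring, zpow_add₀ hq, zpow_add₀ ha]
      norm_cast
      ring
  rw [← hpow, qPoch, qPoch, ← Finset.prod_mul_distrib, ← Finset.prod_range_reflect
    (fun i => (1 - q * q ^ i) * (1 - q ^ (1 - 2 * (j : ℤ)) / a ^ 2 * q ^ i)),
    ← Finset.prod_mul_distrib]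
  refine Finset.prod_congr rfl fun i hi => ?_
  obtain ⟨m, rfl⟩ : ∃ m, j = i + 1 + m :=
    ⟨j - (i + 1), by have := Finset.mem_range.mp hi; omega⟩
  rw [show i + 1 + m - 1 - i = m by omega]
  have e1 : q ^ ((i : ℤ) - ((i + 1 + m : ℕ) : ℤ)) = (q ^ (m + 1))⁻¹ := by
    rw [← zpow_natCast, ← zpow_neg]
    congr 1
    push_cast
    ring
  have e2 : q ^ (1 - 2 * (((i + 1 + m : ℕ)) : ℤ)) = (q ^ (2 * i + 2 * m + 1))⁻¹ := by
    rw [← zpow_natCast, ← zpow_neg]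
    congr 1
    push_cast
    ring
  have e3 : q ^ (2 * (i : ℤ)) = q ^ (2 * i) := by norm_cast
  rw [e1, e2, e3]
  field_simp
  ring

/-- The factors with `i > j`. -/
theorem prod_upper (q a : ℂ) (j l : ℕ) :
    ∏ i ∈ Finset.range l,
        ((1 - q ^ (((j + 1 + i : ℕ) : ℤ) - j)) * (1 - a ^ 2 * q ^ (j + 1 + i + j))) =
      qPoch q q l * qPoch q (q ^ (2 * (j : ℤ) + 1) * a ^ 2) l := by
  rw [qPoch, qPoch, ← Finset.prod_mul_distrib]
  refine Finset.prod_congr rfl fun i _ => ?_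
  have e1 : q ^ (((j + 1 + i : ℕ) : ℤ) - j) = q * q ^ i := by
    rw [show ((j + 1 + i : ℕ) : ℤ) - j = ((i + 1 : ℕ) : ℤ) by push_cast; ring, zpow_natCast]
    ring
  have e2 : q ^ (2 * (j : ℤ) + 1) = q ^ (2 * j + 1) := by norm_cast
  rw [e1, e2]
  ring

/-- The weight of the node `x_j` in the divided difference at `x_0, …, x_k`, in terms of
q-shifted factorials. -/
theorem inv_prod_node_sub {q a : ℂ} (hq : q ≠ 0) (ha : a ≠ 0) {k j : ℕ} (hjk : j ≤ k)
    (hE : (∏ i ∈ (Finset.range (k + 1)).erase j,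
      ((q ^ j * a + q ^ (-(j : ℤ)) / a) / 2 - (q ^ i * a + q ^ (-(i : ℤ)) / a) / 2)) ≠ 0) :
    (∏ i ∈ (Finset.range (k + 1)).erase j,
      ((q ^ j * a + q ^ (-(j : ℤ)) / a) / 2 - (q ^ i * a + q ^ (-(i : ℤ)) / a) / 2))⁻¹ =
      (∏ i ∈ Finset.range k, (-2 * a * q ^ i)) *
        (q ^ ((k : ℤ) - (j : ℤ) ^ 2) * a ^ (-2 * (j : ℤ)) /
          (qPoch q q j * qPoch q (q ^ (1 - 2 * (j : ℤ)) / a ^ 2) j *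
            (qPoch q q (k - j) * qPoch q (q ^ (2 * (j : ℤ) + 1) * a ^ 2) (k - j)))) := by
  have hmain := prod_range_succ_erase hjk (fun i : ℕ => (-2 * a * q ^ i) *
    ((q ^ j * a + q ^ (-(j : ℤ)) / a) / 2 - (q ^ i * a + q ^ (-(i : ℤ)) / a) / 2))
  simp only [node_sub_factor hq ha _ j] at hmain
  rw [prod_lower hq ha, prod_upper] at hmain
  simp only [← node_sub_factor hq ha _ j] at hmain
  rw [Finset.prod_mul_distrib] at hmain
  -- Exchanging the omitted index `j` for `k` changes the product of the `-2aq^i` by `q^{k-j}`.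
  have hshift : (-2 * a * q ^ j) * ∏ i ∈ (Finset.range (k + 1)).erase j, (-2 * a * q ^ i) =
      (∏ i ∈ Finset.range k, (-2 * a * q ^ i)) * (-2 * a * q ^ k) := by
    rw [← Finset.prod_range_succ,
      Finset.mul_prod_erase _ (fun i => -2 * a * q ^ i)
        (Finset.mem_range.mpr (Nat.lt_succ_of_le hjk))]
  have hB : (∏ i ∈ (Finset.range (k + 1)).erase j, (-2 * a * q ^ i)) ≠ 0 :=
    Finset.prod_ne_zero_iff.mpr fun i _ => by simp [ha, hq]
  set B := ∏ i ∈ (Finset.range (k + 1)).erase j, (-2 * a * q ^ i)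
  set A := ∏ i ∈ Finset.range k, (-2 * a * q ^ i)
  set E := ∏ i ∈ (Finset.range (k + 1)).erase j,
    ((q ^ j * a + q ^ (-(j : ℤ)) / a) / 2 - (q ^ i * a + q ^ (-(i : ℤ)) / a) / 2)
  set D₁ := qPoch q q j * qPoch q (q ^ (1 - 2 * (j : ℤ)) / a ^ 2) j
  set D₂ := qPoch q q (k - j) * qPoch q (q ^ (2 * (j : ℤ) + 1) * a ^ 2) (k - j)
  have hD : D₁ * D₂ ≠ 0 := by
    intro h0
    refine mul_ne_zero hB hE ?_
    rw [hmain, mul_assoc, h0, mul_zero]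
  have hBA : q ^ j * B = A * q ^ k := by
    refine mul_left_cancel₀ (mul_ne_zero (neg_ne_zero.mpr two_ne_zero) ha) ?_
    linear_combination hshift
  rw [← mul_div_assoc, eq_div_iff hD, inv_mul_eq_iff_eq_mul₀ hE]
  rw [zpow_sub₀ hq, zpow_natCast] at hmain
  rw [zpow_sub₀ hq, zpow_natCast, show -2 * (j : ℤ) = -(2 * j) by ring, zpow_neg]
  have h1 : q ^ ((j : ℤ) ^ 2) ≠ 0 := zpow_ne_zero _ hq
  have h2 : a ^ (2 * (j : ℤ)) ≠ 0 := zpow_ne_zero _ ha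
  generalize q ^ ((j : ℤ) ^ 2) = u at *
  generalize a ^ (2 * (j : ℤ)) = w at *
  have hqj : q ^ j ≠ 0 := pow_ne_zero _ hq
  generalize q ^ j = y at *
  field_simp at hmain ⊢
  linear_combination (-1) * hmain + E * hBA

/-- The double-sum formula for the moments of the Askey-Wilson polynomials
(Corteel-Stanley-Stanton-Williams, Ismail-Rahman): if `L` is a linear functional on
polynomials with `L(∏_{j<k}(1 - 2axq^j + a²q^{2j})) = (ab,ac,ad;q)_k/(abcd;q)_k` for
`0 ≤ k ≤ n`, then `L((t+x)^n)` is given by the stated double sum. -/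
theorem askey_wilson_moments
    (q a b c d : ℂ) (hq : q ≠ 0) (ha : a ≠ 0) (hb : b ≠ 0) (hc : c ≠ 0) (hd : d ≠ 0)
    (n : ℕ) (habcd : qPoch q (a * b * c * d) n ≠ 0)
    (hdistinct : ∀ i ≤ n, ∀ j ≤ n, i ≠ j →
      (q ^ (i : ℕ) * a + q ^ (-(i : ℤ)) / a) / 2 ≠ (q ^ (j : ℕ) * a + q ^ (-(j : ℤ)) / a) / 2)
    (L : Polynomial ℂ →ₗ[ℂ] ℂ)
    (hL : ∀ k ≤ n,
      L (∏ j ∈ Finset.range k,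
          (1 - Polynomial.C (2 * a * q ^ j) * Polynomial.X + Polynomial.C (a ^ 2 * q ^ (2 * j))))
        = qPoch q (a * b) k * qPoch q (a * c) k * qPoch q (a * d) k /
            qPoch q (a * b * c * d) k) :
    ∀ t : ℂ,
      L ((Polynomial.C t + Polynomial.X) ^ n) =
        ∑ k ∈ Finset.range (n + 1),
          qPoch q (a * c) k * qPoch q (a * b) k * qPoch q (a * d) k /
              qPoch q (a * b * c * d) k *
            ∑ j ∈ Finset.range (k + 1),
              q ^ ((k : ℤ) - (j : ℤ) ^ 2) * a ^ (-2 * (j : ℤ)) *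
                (t + (q ^ (j : ℕ) * a + q ^ (-(j : ℤ)) / a) / 2) ^ n /
                (qPoch q q j * qPoch q (q ^ (1 - 2 * (j : ℤ)) / a ^ 2) j *
                  (qPoch q q (k - j) * qPoch q (q ^ (2 * (j : ℤ) + 1) * a ^ 2) (k - j))) := by
  intro t
  set v : ℕ → ℂ := fun j => (q ^ j * a + q ^ (-(j : ℤ)) / a) / 2 with hv
  have hinj : Set.InjOn v (Finset.range (n + 1)) := by
    intro i hi j hj hij
    by_contra hne
    simp only [Finset.coe_range, Set.mem_Iio] at hi hj
    exact hdistinct i (by omega) j (by omega) hne hij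
  have hdeg : ((C t + X : ℂ[X]) ^ n).degree < (Finset.range (n + 1)).card := by
    have h1 : (C t + X : ℂ[X]).degree = 1 := by rw [add_comm]; exact degree_X_add_C t
    rw [degree_pow, h1, Finset.card_range, nsmul_one]
    exact_mod_cast Nat.lt_succ_self n
  rw [Lagrange.eq_interpolate hinj hdeg, interpolate_eq_newton (n + 1) v _ hinj, map_sum]
  refine Finset.sum_congr rfl fun k hk => ?_
  have hkn : k ≤ n := by simpa [Nat.lt_succ_iff] using hk
  have hLk := hL k hkn
  rw [askeyWilson_basis_eq_nodal hq ha k, ← smul_eq_C_mul, map_smul, smul_eq_mul] at hLk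
  rw [← smul_eq_C_mul, map_smul, smul_eq_mul,
    show qPoch q (a * c) k * qPoch q (a * b) k = qPoch q (a * b) k * qPoch q (a * c) k by ring,
    ← hLk, Finset.sum_mul, Finset.mul_sum]
  refine Finset.sum_congr rfl fun j hj => ?_
  have hjk : j ≤ k := by simpa [Nat.lt_succ_iff] using hj
  have hE : (∏ i ∈ (Finset.range (k + 1)).erase j, (v j - v i)) ≠ 0 := by
    refine Finset.prod_ne_zero_iff.mpr fun i hi => ?_
    simp only [Finset.mem_erase, Finset.mem_range] at hi
    exact sub_ne_zero.mpr (hdistinct j (by omega) i (by omega) (Ne.symm hi.1))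
  have key := inv_prod_node_sub hq ha hjk hE
  simp only [eval_pow, eval_add, eval_C, eval_X]
  rw [div_eq_mul_inv, key]
  ring
end

section
/- Let q, a, b, c, d be nonzero complex numbers and n ≥ 1 an integer; assume (abcd;q)_{2n−2} ≠ 0. Then the Hankel-type determinant of the moments of the little q-Jacobi polynomials satisfies det((ab;q)_{i+j} / (abcd;q)_{i+j})_{0 ≤ i,j ≤ n−1} = (ab)^{n(n−1)/2} q^{n(n−1)(n−2)/3} ∏_{k=0}^{n−1} (q;q)_k (ab;q)_k (cd;q)_k / (abcd;q)_{k+n−1}. -/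
open Polynomial in
/-- The polynomial `∏_{k<j} (1 - a_k X) ∏_{j≤k<n} (1 - b_k X)`, of degree at most `n` when
`j ≤ n`. -/
noncomputable def mixedPoly (a b : ℕ → ℂ) (n j : ℕ) : ℂ[X] :=
  (∏ k ∈ Finset.range j, (1 - C (a k) * X)) * ∏ k ∈ Finset.Ico j n, (1 - C (b k) * X)

open Polynomial in
/-- Consecutive mixed polynomials differ only in the factor of index `j`, which changes from
`1 - b_j X` to `1 - a_j X`. -/
lemma mixedPoly_succ (a b : ℕ → ℂ) (n j : ℕ) (hj : j ≤ n) :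
    mixedPoly a b (n + 1) (j + 1) = mixedPoly a b (n + 1) j +
      C (b j - a j) * (X * mixedPoly a (fun k => b (k + 1)) n j) := by
  have h1 : ∏ k ∈ Finset.Ico j n, (1 - C (b (k + 1)) * X) =
      ∏ k ∈ Finset.Ico (j + 1) (n + 1), (1 - C (b k) * X) :=
    Finset.prod_Ico_add' (fun k => (1 - C (b k) * X : ℂ[X])) j n 1
  have h2 : ∏ k ∈ Finset.Ico j (n + 1), (1 - C (b k) * X) =
      (1 - C (b j) * X) * ∏ k ∈ Finset.Ico (j + 1) (n + 1), (1 - C (b k) * X) :=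
    Finset.prod_eq_prod_Ico_succ_bot (by omega) _
  simp only [mixedPoly, h1, h2, Finset.prod_range_succ, C_sub]
  ring

open Polynomial in
lemma natDegree_mixedPoly_le (a b : ℕ → ℂ) (n j : ℕ) (hj : j ≤ n) :
    (mixedPoly a b n j).natDegree ≤ n := by
  have hlin (s : ℂ) : (1 - C s * X : ℂ[X]).natDegree ≤ 1 := by compute_degree
  have hprod (f : ℕ → ℂ) (s : Finset ℕ) :
      (∏ k ∈ s, (1 - C (f k) * X : ℂ[X])).natDegree ≤ s.card :=
    (natDegree_prod_le _ _).trans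
      ((Finset.sum_le_card_nsmul _ _ 1 fun k _ => hlin _).trans (by simp))
  have h := natDegree_mul_le_of_le (hprod a (Finset.range j)) (hprod b (Finset.Ico j n))
  simp only [Finset.card_range, Nat.card_Ico] at h
  exact h.trans (by omega)

open Polynomial in
lemma coeff_zero_mixedPoly (a b : ℕ → ℂ) (n j : ℕ) : (mixedPoly a b n j).coeff 0 = 1 := by
  simp [mixedPoly, coeff_zero_eq_eval_zero, eval_prod]

/-- Subtracting from each column of the coefficient matrix its left neighbour leaves the first
row `(1, 0, …, 0)`, and the complementary minor is, up to the column factors `b_j - a_j`, a matrix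
of the same kind, one size smaller and with `b` shifted by one. -/
lemma det_coeff_mixedPoly (n : ℕ) : ∀ a b : ℕ → ℂ,
    Matrix.det (Matrix.of fun i j : Fin (n + 1) => (mixedPoly a b n j).coeff i) =
      ∏ s ∈ Finset.range n, ∏ j ∈ Finset.range (n - s), (b (j + s) - a j) := by
  induction n with
  | zero => intro a b; simp [coeff_zero_mixedPoly]
  | succ n ih =>
    intro a b
    set b' : ℕ → ℂ := fun k => b (k + 1) with hb'
    have hcol := Matrix.det_eq_of_forall_col_eq_smul_add_pred
      (A := Matrix.of fun i j : Fin (n + 2) => (mixedPoly a b (n + 1) j).coeff i)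
      (B := Matrix.of fun i : Fin (n + 2) => Fin.cons ((mixedPoly a b (n + 1) 0).coeff i)
        (fun j : Fin (n + 1) => (b j - a j) * (Polynomial.X * mixedPoly a b' n j).coeff i))
      (fun _ => 1) (by intro i; simp) (by
        intro i j
        simp only [Matrix.of_apply, Fin.val_succ, Fin.val_castSucc, Fin.cons_succ]
        rw [mixedPoly_succ a b n j (by omega), Polynomial.coeff_add, Polynomial.coeff_C_mul]
        ring)
    rw [hcol, Matrix.det_succ_row_zero, Fin.sum_univ_succ, Finset.sum_eq_zero, add_zero]
    · have hsub : (Matrix.of fun i : Fin (n + 2) => (Fin.cons ((mixedPoly a b (n + 1) 0).coeff i)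
          (fun j : Fin (n + 1) => (b j - a j) * (Polynomial.X * mixedPoly a b' n j).coeff i) :
            Fin (n + 2) → ℂ)).submatrix Fin.succ (Fin.succAbove 0) =
          Matrix.of fun i j : Fin (n + 1) => (b j - a j) *
            (Matrix.of fun i j : Fin (n + 1) => (mixedPoly a b' n j).coeff i) i j := by
        ext i j
        simp
      rw [hsub, Matrix.det_mul_row, ih a b', Finset.prod_range_succ',
        Fin.prod_univ_eq_prod_range (fun j => b j - a j) (n + 1)]
      simp [coeff_zero_mixedPoly, hb', mul_comm, add_assoc]
    · intro j _
      simp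

/-- Each row of the matrix is a polynomial vector evaluated at `v i`, so the matrix is a
Vandermonde matrix times the coefficient matrix. -/
lemma det_eval_mixedPoly (a b : ℕ → ℂ) (n : ℕ) (v : Fin (n + 1) → ℂ) :
    Matrix.det (Matrix.of fun i j : Fin (n + 1) => (mixedPoly a b n j).eval (v i)) =
      (Matrix.vandermonde v).det *
        ∏ s ∈ Finset.range n, ∏ j ∈ Finset.range (n - s), (b (j + s) - a j) := by
  rw [← det_coeff_mixedPoly, ← Matrix.det_mul]
  congr 1
  ext i j
  have hdeg : (mixedPoly a b n j).natDegree < n + 1 :=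
    Nat.lt_succ_of_le (natDegree_mixedPoly_le a b n j (by omega))
  simp only [Matrix.mul_apply, Matrix.of_apply, Matrix.vandermonde_apply]
  rw [Polynomial.eval_eq_sum_range' hdeg,
    ← Fin.sum_univ_eq_sum_range (fun k => (mixedPoly a b n j).coeff k * v i ^ k) (n + 1)]
  exact Finset.sum_congr rfl fun k _ => mul_comm _ _

lemma qPoch_add (q a : ℂ) (m n : ℕ) : qPoch q a (m + n) = qPoch q a m * qPoch q (a * q ^ m) n := by
  simp only [qPoch, Finset.prod_range_add, pow_add, mul_assoc]

/-- With geometric sequences of parameters, the values of the mixed polynomials at powers of `q` are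
the entries of the Hankel matrix, up to row factors. -/
lemma eval_mixedPoly_pow (q x y : ℂ) (m i j : ℕ) :
    (mixedPoly (fun k => x * q ^ k) (fun k => y * q ^ k) m j).eval (q ^ i) =
      qPoch q (x * q ^ i) j * qPoch q (y * q ^ (i + j)) (m - j) := by
  simp only [mixedPoly, qPoch, Polynomial.eval_mul, Polynomial.eval_prod, Polynomial.eval_sub,
    Polynomial.eval_one, Polynomial.eval_C, Polynomial.eval_X, Finset.prod_Ico_eq_prod_range]
  congr 1 <;> refine Finset.prod_congr rfl fun k _ => ?_ <;> ring

/-- Node `0` contributes the differences `q^{j+1} - 1`; the remaining nodes are `q` times those of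
the smaller Vandermonde matrix. -/
lemma det_vandermonde_pow_succ (q : ℂ) (n : ℕ) :
    (Matrix.vandermonde fun i : Fin (n + 1) => q ^ (i : ℕ)).det =
      (-1) ^ n * qPoch q q n * (∏ j ∈ Finset.range n, q ^ j) *
        (Matrix.vandermonde fun i : Fin n => q ^ (i : ℕ)).det := by
  have h0 : ∏ j : Fin n, (q ^ ((j : ℕ) + 1) - 1) = (-1) ^ n * qPoch q q n := by
    rw [Fin.prod_univ_eq_prod_range (fun j => q ^ (j + 1) - 1) n, qPoch,
      ← Finset.card_range n, ← Finset.prod_const, Finset.card_range, ← Finset.prod_mul_distrib]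
    exact Finset.prod_congr rfl fun k _ => by ring
  have h1 : ∏ i : Fin n, ∏ _j ∈ Finset.Ioi i, q = ∏ j ∈ Finset.range n, q ^ j := by
    simp only [Finset.prod_const, Fin.card_Ioi]
    rw [Fin.prod_univ_eq_prod_range (fun i => q ^ (n - 1 - i)) n,
      Finset.prod_range_reflect (fun i => q ^ i) n]
  rw [Matrix.det_vandermonde, Matrix.det_vandermonde, Fin.prod_univ_succ, ← h0, ← h1, mul_assoc,
    ← Finset.prod_mul_distrib]
  simp only [Fin.prod_Ioi_zero, Fin.prod_Ioi_succ, Fin.val_succ, Fin.val_zero, pow_zero,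
    ← Finset.prod_mul_distrib]
  refine Finset.prod_congr rfl fun i _ => ?_
  congr 1
  exact Finset.prod_congr rfl fun j _ => by ring

/-- The factors added in passing from `m` to `m + 1` are those with `j + s = m`. -/
lemma prod_triangle_succ (q x z : ℂ) (m : ℕ) :
    ∏ s ∈ Finset.range (m + 1), ∏ j ∈ Finset.range (m + 1 - s),
        (x * z * q ^ (j + s) - x * q ^ j) =
      (-x) ^ (m + 1) * (∏ j ∈ Finset.range (m + 1), q ^ j) * qPoch q z (m + 1) *
        ∏ s ∈ Finset.range m, ∏ j ∈ Finset.range (m - s), (x * z * q ^ (j + s) - x * q ^ j) := by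
  have h1 : ∏ s ∈ Finset.range m, ∏ j ∈ Finset.range (m - s),
        (x * z * q ^ (j + s) - x * q ^ j) =
      ∏ s ∈ Finset.range (m + 1), ∏ j ∈ Finset.range (m - s),
        (x * z * q ^ (j + s) - x * q ^ j) := by
    simp [Finset.prod_range_succ]
  have h2 : ∏ j ∈ Finset.range (m + 1), q ^ j = ∏ s ∈ Finset.range (m + 1), q ^ (m - s) := by
    rw [← Finset.prod_range_reflect]
    simp
  have h3 : (-x) ^ (m + 1) = ∏ _s ∈ Finset.range (m + 1), (-x) := by simp
  rw [h1, h2, h3, qPoch, ← Finset.prod_mul_distrib, ← Finset.prod_mul_distrib,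
    ← Finset.prod_mul_distrib]
  refine Finset.prod_congr rfl fun s hs => ?_
  have hs' : s ≤ m := by simpa [Nat.lt_succ_iff] using hs
  rw [Nat.succ_sub hs', Finset.prod_range_succ, mul_comm, pow_add]
  ring

lemma vandermonde_mul_triangle (q x z : ℂ) (m : ℕ) :
    (Matrix.vandermonde fun i : Fin (m + 1) => q ^ (i : ℕ)).det *
        ∏ s ∈ Finset.range m, ∏ j ∈ Finset.range (m - s), (x * z * q ^ (j + s) - x * q ^ j) =
      x ^ ((m + 1) * m / 2) * q ^ ((m + 1) * m * (m - 1) / 3) *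
        ∏ k ∈ Finset.range (m + 1), qPoch q q k * qPoch q z k := by
  induction m with
  | zero => simp [qPoch]
  | succ m ih =>
    have e1 : (m + 1 + 1) * (m + 1) / 2 = (m + 1) * m / 2 + (m + 1) := by
      rw [show (m + 1 + 1) * (m + 1) = (m + 1) * m + (m + 1) * 2 by ring,
        Nat.add_mul_div_right _ _ (by norm_num)]
    have e2 : (m + 1 + 1) * (m + 1) * (m + 1 - 1) / 3 =
        (m + 1) * m * (m - 1) / 3 + (m + 1) * m := by
      rw [← Nat.add_mul_div_right _ _ (by norm_num : 0 < 3)]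
      congr 1
      cases m with
      | zero => rfl
      | succ k => simp only [Nat.add_sub_cancel]; ring
    have e3 : (∏ j ∈ Finset.range (m + 1), q ^ j) * ∏ j ∈ Finset.range (m + 1), q ^ j =
        q ^ ((m + 1) * m) := by
      rw [Finset.prod_pow_eq_pow_sum, ← pow_add, ← mul_two, Finset.sum_range_id_mul_two,
        Nat.add_sub_cancel]
    have e4 : ((-1 : ℂ)) ^ (m + 1) * (-x) ^ (m + 1) = x ^ (m + 1) := by
      rw [← mul_pow]; simp
    rw [det_vandermonde_pow_succ, prod_triangle_succ, e1, e2, pow_add x, pow_add q, ← e3, ← e4,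
      Finset.prod_range_succ _ (m + 1)]
    linear_combination ((-1) ^ (m + 1) * (-x) ^ (m + 1) * qPoch q q (m + 1) * qPoch q z (m + 1) *
      (∏ j ∈ Finset.range (m + 1), q ^ j) ^ 2) * ih

/-- Hankel determinant of the moments of the little q-Jacobi polynomials
(equation (4.8)):
`det((ab;q)_{i+j}/(abcd;q)_{i+j})_{0 ≤ i,j ≤ n-1}
  = (ab)^{n(n-1)/2} q^{n(n-1)(n-2)/3} ∏_{k=0}^{n-1} (q,ab,cd;q)_k / (abcd;q)_{k+n-1}`. -/
theorem hankel_det_little_q_jacobi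
    (q a b c d : ℂ) (hq : q ≠ 0) (ha : a ≠ 0) (hb : b ≠ 0) (hc : c ≠ 0) (hd : d ≠ 0)
    (n : ℕ) (hn : 1 ≤ n) (habcd : qPoch q (a * b * c * d) (2 * n - 2) ≠ 0) :
    Matrix.det (Matrix.of fun i j : Fin n =>
        qPoch q (a * b) ((i : ℕ) + (j : ℕ)) / qPoch q (a * b * c * d) ((i : ℕ) + (j : ℕ)))
      = (a * b) ^ (n * (n - 1) / 2) * q ^ (n * (n - 1) * (n - 2) / 3) *
          ∏ k ∈ Finset.range n,
            qPoch q q k * qPoch q (a * b) k * qPoch q (c * d) k /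
              qPoch q (a * b * c * d) (k + n - 1) := by
  obtain ⟨m, rfl⟩ : ∃ m, n = m + 1 := ⟨n - 1, by omega⟩
  set y := a * b * c * d with hy
  have hy' : y = a * b * (c * d) := by rw [hy]; ring
  have hne (k : ℕ) (hk : k ≤ 2 * m) : qPoch q y k ≠ 0 := by
    have h := qPoch_add q y k (2 * m - k)
    rw [Nat.add_sub_cancel' hk] at h
    rw [show 2 * (m + 1) - 2 = 2 * m by omega, h] at habcd
    exact left_ne_zero_of_mul habcd
  have hmat : (Matrix.of fun i j : Fin (m + 1) =>
        qPoch q (a * b) ((i : ℕ) + (j : ℕ)) / qPoch q y ((i : ℕ) + (j : ℕ))) =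
      Matrix.of fun i j : Fin (m + 1) => (qPoch q (a * b) i / qPoch q y (i + m)) *
        (Matrix.of fun i j : Fin (m + 1) =>
          (mixedPoly (fun k => a * b * q ^ k) (fun k => y * q ^ k) m j).eval (q ^ (i : ℕ))) i j := by
    ext i j
    have hi := i.is_lt
    have hj := j.is_lt
    simp only [Matrix.of_apply]
    have h := qPoch_add q y (i + j) (m - j)
    rw [show (i + j + (m - j) : ℕ) = i + m by omega] at h
    have h1 := hne (i + j) (by omega)
    have h2 := hne (i + m) (by omega)
    rw [eval_mixedPoly_pow, qPoch_add q (a * b), div_mul_eq_mul_div, div_eq_div_iff h1 h2, h]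
    ring
  rw [hmat, Matrix.det_mul_column, det_eval_mixedPoly,
    Fin.prod_univ_eq_prod_range (fun i => qPoch q (a * b) i / qPoch q y (i + m)) (m + 1)]
  have hV := vandermonde_mul_triangle q (a * b) (c * d) m
  rw [← hy'] at hV
  rw [hV, show m + 1 - 1 = m from rfl, show m + 1 - 2 = m - 1 from rfl, mul_left_comm,
    ← Finset.prod_mul_distrib]
  congr 1
  refine Finset.prod_congr rfl fun k _ => ?_
  rw [show k + (m + 1) - 1 = k + m from rfl]
  ring
end

section
/- Let n ≥ 1, let a_0, …, a_{n−1} be complex numbers, and let b_0, …, b_n be pairwise distinct complex numbers. For 0 ≤ k ≤ m ≤ n define u(m,k) = Σ_{r=0}^{k} [∏_{j=0}^{m−1}(b_r + a_j)] / [∏_{j=0, j≠r}^{k}(b_r − b_j)], with u(0,k) = δ_{0,k} (Kronecker delta). Then these connection coefficients satisfy the recurrence u(n,k) = u(n−1, k−1) + (a_{n−1} + b_k) u(n−1, k) for 1 ≤ k ≤ n, together with the boundary condition u(n,0) = ∏_{i=0}^{n−1}(a_i + b_0). -/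
/-!
The sum defining `u m k` is the divided difference `f[b 0, …, b k]` of
`f = ∏ j < m, (X + a j)`. Multiplying `f` by `X + c = (X - b k) + (c + b k)` and using that
`X - b k` cancels one node gives the recurrence (`dividedDiff_mul_add`). The formula for `u` is
given only for `m ≥ 1`; at `m = 0` the prescribed value `δ_{0,k}` agrees with it because the divided
difference at `b 0, …, b k` of a polynomial of degree at most `k` is its coefficient of `X ^ k`
(`dividedDiff_one`, by Lagrange interpolation), so the same step applies when `n = 1`.
-/

/-- The divided difference of `f` at the nodes `b 0, …, b k`, in its explicit form; `f` is recorded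
through its values `f r` at the nodes `b r`. -/
noncomputable def dividedDiff (b f : ℕ → ℂ) (k : ℕ) : ℂ :=
  ∑ r ∈ Finset.range (k + 1), f r / ∏ j ∈ (Finset.range (k + 1)).erase r, (b r - b j)

lemma dividedDiff_one {b : ℕ → ℂ} {k : ℕ}
    (hb : Set.InjOn b (Finset.range (k + 1) : Finset ℕ)) :
    dividedDiff b (fun _ => 1) k = if k = 0 then 1 else 0 := by
  have h := Lagrange.coeff_eq_sum hb (P := 1) (by
    rw [Polynomial.degree_one, Finset.card_range]; exact_mod_cast Nat.succ_pos k)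
  simp only [Finset.card_range, Nat.add_sub_cancel, Polynomial.coeff_one,
    Polynomial.eval_one] at h
  exact h.symm

/-- Leibniz rule for divided differences against the linear factor `X + c`. -/
lemma dividedDiff_mul_add {b : ℕ → ℂ} {k : ℕ} (f : ℕ → ℂ) (c : ℂ)
    (hb : Set.InjOn b (Finset.range (k + 2) : Finset ℕ)) :
    dividedDiff b (fun r => f r * (b r + c)) (k + 1) =
      dividedDiff b f k + (c + b (k + 1)) * dividedDiff b f (k + 1) := by
  unfold dividedDiff
  rw [Finset.sum_range_succ, Finset.sum_range_succ _ (k + 1), mul_add, ← add_assoc,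
    Finset.mul_sum, ← Finset.sum_add_distrib]
  congr 1
  · refine Finset.sum_congr rfl fun r hr => ?_
    have hr' : r < k + 1 := Finset.mem_range.mp hr
    have hne : b r - b (k + 1) ≠ 0 := fun h => by
      have := hb (by simp; omega) (by simp) (sub_eq_zero.mp h)
      omega
    have hprod : ∏ j ∈ (Finset.range (k + 1 + 1)).erase r, (b r - b j) =
        (b r - b (k + 1)) * ∏ j ∈ (Finset.range (k + 1)).erase r, (b r - b j) := by
      rw [Finset.range_add_one (n := k + 1), Finset.erase_insert_of_ne (by omega),
        Finset.prod_insert (by simp)]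
    have hP : ∏ j ∈ (Finset.range (k + 1)).erase r, (b r - b j) ≠ 0 := by
      refine Finset.prod_ne_zero_iff.mpr fun j hj h => ?_
      rw [Finset.mem_erase, Finset.mem_range] at hj
      exact hj.1 (hb (by simp; omega) (by simp; omega) (sub_eq_zero.mp h)).symm
    rw [hprod]
    field_simp
    ring
  · ring


/-- The connection coefficients `u(m,k) = Σ_{r=0}^k ∏_{j=0}^{m-1}(b_r+a_j) /
∏_{j=0,j≠r}^{k}(b_r-b_j)` (with `u(0,k) = δ_{0,k}`) satisfy the recurrence
`u(n,k) = u(n-1,k-1) + (a_{n-1}+b_k) u(n-1,k)` for `1 ≤ k ≤ n`, together with the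
boundary condition `u(n,0) = ∏_{i=0}^{n-1}(a_i+b_0)`. -/
theorem newton_coefficients_recurrence
    (n : ℕ) (hn : 1 ≤ n) (a b : ℕ → ℂ)
    (hb : ∀ i ≤ n, ∀ j ≤ n, i ≠ j → b i ≠ b j)
    (u : ℕ → ℕ → ℂ)
    (hu0 : ∀ k : ℕ, u 0 k = if k = 0 then 1 else 0)
    (hu : ∀ m, 1 ≤ m → m ≤ n → ∀ k ≤ n, u m k =
      ∑ r ∈ Finset.range (k + 1),
        (∏ j ∈ Finset.range m, (b r + a j)) /
          ∏ j ∈ (Finset.range (k + 1)).erase r, (b r - b j)) :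
    (∀ k, 1 ≤ k → k ≤ n → u n k = u (n - 1) (k - 1) + (a (n - 1) + b k) * u (n - 1) k) ∧
      u n 0 = ∏ i ∈ Finset.range n, (a i + b 0) := by
  have hinj : ∀ k ≤ n, Set.InjOn b (Finset.range (k + 1) : Finset ℕ) := by
    intro k hk i hi j hj hij
    simp only [Finset.coe_range, Set.mem_Iio] at hi hj
    by_contra hne
    exact hb i (by omega) j (by omega) hne hij
  have hu' : ∀ m ≤ n, ∀ k ≤ n,
      u m k = dividedDiff b (fun r => ∏ j ∈ Finset.range m, (b r + a j)) k := by
    intro m hm k hk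
    rcases Nat.eq_zero_or_pos m with rfl | hpos
    · simp only [Finset.range_zero, Finset.prod_empty]
      rw [hu0, dividedDiff_one (hinj k hk)]
    · exact hu m hpos hm k hk
  obtain ⟨m, rfl⟩ : ∃ m, n = m + 1 := ⟨n - 1, by omega⟩
  constructor
  · intro k hk1 hk
    obtain ⟨k, rfl⟩ : ∃ l, k = l + 1 := ⟨k - 1, by omega⟩
    simp only [Nat.add_sub_cancel]
    rw [hu' (m + 1) le_rfl _ hk, hu' m (by omega) k (by omega), hu' m (by omega) _ hk]
    simp only [Finset.prod_range_succ]
    exact dividedDiff_mul_add _ _ (hinj (k + 1) hk)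
  · rw [hu' (m + 1) le_rfl 0 (by omega)]
    simp [dividedDiff, add_comm]
end

section
/- Let q, a, b, c, d, z be complex numbers with q, a, b, c, d, z nonzero, let x = (z + z^{−1})/2, and let i ≥ 0 and j ≥ 1 be integers with (abcd;q)_{i+j} ≠ 0. Define A_{i,j} = (ac;q)_i (ad;q)_i (bc;q)_j (bd;q)_j (ab;q)_{i+j} / (abcd;q)_{i+j} and B_{i,j} = [(ab;q)_{i+j−1} · (−b q^{j−1}) / (abcd;q)_{i+j}] · [c + d − 2x + (1 − cd)(a q^{i} + b q^{j−1}) − ab(c + d − 2cdx) q^{i+j−1}]. Then A_{i,j} − (1 − 2bxq^{j−1} + b²q^{2j−2}) A_{i,j−1} = (ac;q)_i (ad;q)_i (bc;q)_{j−1} (bd;q)_{j−1} B_{i,j}. (This identity shows that the Gram determinant formula det(A_{i,j})_{0≤i,j≤n} = C·p_n and the determinant formula det(B_{i,j})_{0≤i≤n−1,1≤j≤n} = D_n(a,b)·p_n for the Askey-Wilson polynomials are equivalent.) -/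
lemma qPoch_succ (q a : ℂ) (n : ℕ) : qPoch q a (n + 1) = qPoch q a n * (1 - a * q ^ n) :=
  Finset.prod_range_succ _ _

/-- The column-reduction identity (Proposition 4.3) showing the equivalence of the Gram
determinant formula and the determinant formula for Askey-Wilson polynomials:
`A_{i,j} - (1 - 2bxq^{j-1} + b²q^{2j-2}) A_{i,j-1} = (ac,ad;q)_i (bc,bd;q)_{j-1} B_{i,j}`. -/
theorem gram_column_reduction
    (q a b c d z : ℂ) (hq : q ≠ 0) (ha : a ≠ 0) (hb : b ≠ 0) (hc : c ≠ 0) (hd : d ≠ 0)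
    (hz : z ≠ 0) (x : ℂ) (hx : x = (z + z⁻¹) / 2)
    (i j : ℕ) (hj : 1 ≤ j) (habcd : qPoch q (a * b * c * d) (i + j) ≠ 0)
    (A : ℕ → ℕ → ℂ)
    (hA : ∀ i' j' : ℕ, A i' j' =
      qPoch q (a * c) i' * qPoch q (a * d) i' * qPoch q (b * c) j' * qPoch q (b * d) j' *
        qPoch q (a * b) (i' + j') / qPoch q (a * b * c * d) (i' + j'))
    (B : ℕ → ℕ → ℂ)
    (hB : B i j =
      qPoch q (a * b) (i + j - 1) * (-(b * q ^ (j - 1))) / qPoch q (a * b * c * d) (i + j) *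
        (c + d - 2 * x + (1 - c * d) * (a * q ^ i + b * q ^ (j - 1)) -
          a * b * (c + d - 2 * c * d * x) * q ^ (i + j - 1))) :
    A i j - (1 - 2 * b * x * q ^ (j - 1) + b ^ 2 * q ^ (2 * j - 2)) * A i (j - 1)
      = qPoch q (a * c) i * qPoch q (a * d) i * qPoch q (b * c) (j - 1) *
          qPoch q (b * d) (j - 1) * B i j := by
  obtain ⟨k, rfl⟩ : ∃ k, j = k + 1 := ⟨j - 1, by omega⟩
  have e1 : i + (k + 1) - 1 = i + k := by omega
  have e2 : 2 * (k + 1) - 2 = k * 2 := by omega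
  rw [← add_assoc, qPoch_succ] at habcd
  obtain ⟨h1, h2⟩ := mul_ne_zero_iff.mp habcd
  rw [hB, hA, hA, e1, e2, Nat.add_sub_cancel, ← add_assoc]
  simp only [qPoch_succ]
  -- Fold the shifted factorials and powers into atoms so that only polynomial algebra remains.
  generalize qPoch q (a * b * c * d) (i + k) = D at *
  rw [pow_add] at h2 ⊢
  rw [pow_mul]
  generalize q ^ i = s at *
  generalize q ^ k = t at *
  generalize hE : 1 - a * b * c * d * (s * t) = E at *
  field_simp
  rw [← hE]
  ring
end
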